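/- arXiv:0710.0106 — 2 statements merged into one kernel-verified Lean document; each statement's English description precedes it below -/
import Mathlib

section
/- Let X be a real linear space, (Y, N) a fuzzy Banach space, (Z, N′) a fuzzy normed space, and φ : X × X → Z with φ(2x, 2y) = α · φ(x, y) for all x, y ∈ X, where 0 < |α| < 2. Suppose f, g, h : X → Y are odd functions such that N (f(x+y) + f(x−y) − 2g(x) − 2h(y)) t ≥ N′ (φ(x, y)) t for all x, y ∈ X and all t ∈ ℝ. Then there exists a unique additive mapping T : X → Y such that N (f(x) − T(x)) t ≥ N″ x (((2 − |α|)/4) · t) and N (g(x) + h(x) − T(x)) t ≥ N″ x (((6 − 3|α|)/(14 − |α|)) · t) for all x ∈ X and all t > 0. -/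
/-! Eliminating `g` and `h` from the inequality at `(x, y)`, `(x, 0)` and `(0, y)` bounds the
Jensen defect `f (x + y) + f (x - y) - 2 f x` by the three values of `φ`; for `y = x` this bounds
`f (2x) - 2 f x`. The bounds are multiplied by `|α|` under doubling while the Hyers iterates
`2⁻ⁿ f (2ⁿ x)` divide by `2`, so consecutive iterates differ by geometrically small amounts. Their
limit `T` is close to `f`, the Jensen defect of `T` is the limit of the Hyers iterates of the
defect of `f`, hence zero, and `T` is additive. The bound for `g + h` follows from
`2 (g x + h x) ≈ f (2x) ≈ T (2x) = 2 T x`. The difference of two candidates for `T` equals its own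
Hyers iterates, which tend to zero. -/

open Filter Finset

/-- A fuzzy norm on a real vector space, following Bag–Samanta. -/
structure IsFuzzyNorm {X : Type*} [AddCommGroup X] [Module ℝ X] (N : X → ℝ → ℝ) : Prop where
  nonneg : ∀ (x : X) (t : ℝ), 0 ≤ N x t
  le_one : ∀ (x : X) (t : ℝ), N x t ≤ 1
  eq_zero_of_nonpos : ∀ (x : X) (c : ℝ), c ≤ 0 → N x c = 0
  eq_zero_iff : ∀ x : X, x = 0 ↔ ∀ c : ℝ, 0 < c → N x c = 1
  smul_eq : ∀ (c : ℝ) (x : X) (t : ℝ), c ≠ 0 → N (c • x) t = N x (t / |c|)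
  min_le_add : ∀ (x y : X) (s t : ℝ), min (N x s) (N y t) ≤ N (x + y) (s + t)
  mono : ∀ x : X, Monotone (N x)
  tendsto_one : ∀ x : X, Tendsto (N x) atTop (nhds 1)

/-- Convergence of a sequence to a fuzzy limit in a fuzzy normed space. -/
def FuzzyTendsto {X : Type*} [AddCommGroup X] [Module ℝ X] (N : X → ℝ → ℝ)
    (xs : ℕ → X) (x : X) : Prop :=
  ∀ t : ℝ, 0 < t → Tendsto (fun n => N (xs n - x) t) atTop (nhds 1)

/-- Cauchy sequences in a fuzzy normed space. -/
def FuzzyCauchy {X : Type*} [AddCommGroup X] [Module ℝ X] (N : X → ℝ → ℝ)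
    (xs : ℕ → X) : Prop :=
  ∀ ε : ℝ, 0 < ε → ∀ t : ℝ, 0 < t → ∃ n₀ : ℕ, ∀ n ≥ n₀, ∀ p : ℕ, 0 < p →
    1 - ε < N (xs (n + p) - xs n) t

/-- A fuzzy normed space is complete (a fuzzy Banach space) if every Cauchy
sequence converges. -/
def IsFuzzyComplete {X : Type*} [AddCommGroup X] [Module ℝ X] (N : X → ℝ → ℝ) : Prop :=
  ∀ xs : ℕ → X, FuzzyCauchy N xs → ∃ x : X, FuzzyTendsto N xs x

/-- Quadratic functional equation. -/
def IsQuadratic {X Y : Type*} [AddCommGroup X] [AddCommGroup Y] (Q : X → Y) : Prop :=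
  ∀ x y : X, Q (x + y) + Q (x - y) = 2 • Q x + 2 • Q y

/-- Additive functional equation. -/
def IsAdditive {X Y : Type*} [AddCommGroup X] [AddCommGroup Y] (T : X → Y) : Prop :=
  ∀ x y : X, T (x + y) = T x + T y

/-- The control function `N″ x t = min {N′(φ(x,x))(t/3), N′(φ(x,0))(t/3), N′(φ(0,x))(t/3)}`. -/
noncomputable def Ndd {X Z : Type*} [Zero X] (N' : Z → ℝ → ℝ) (φ : X × X → Z) (x : X) (t : ℝ) : ℝ :=
  min (min (N' (φ (x, x)) (t / 3)) (N' (φ (x, 0)) (t / 3))) (N' (φ (0, x)) (t / 3))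

namespace IsFuzzyNorm

variable {V : Type*} [AddCommGroup V] [Module ℝ V] {N : V → ℝ → ℝ}

lemma map_zero_eq_one (hN : IsFuzzyNorm N) {t : ℝ} (ht : 0 < t) : N 0 t = 1 :=
  (hN.eq_zero_iff 0).1 rfl t ht

lemma map_neg (hN : IsFuzzyNorm N) (x : V) (t : ℝ) : N (-x) t = N x t := by
  simpa using hN.smul_eq (-1) x t (by norm_num)

lemma map_sub_comm (hN : IsFuzzyNorm N) (x y : V) (t : ℝ) : N (x - y) t = N (y - x) t := by
  rw [← hN.map_neg, neg_sub]

lemma map_inv_smul (hN : IsFuzzyNorm N) {c : ℝ} (hc : c ≠ 0) (x : V) (t : ℝ) :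
    N (c⁻¹ • x) t = N x (|c| * t) := by
  rw [hN.smul_eq _ _ _ (inv_ne_zero hc), abs_inv, div_inv_eq_mul, mul_comm]

lemma le_map_add (hN : IsFuzzyNorm N) {x y : V} {b s t : ℝ} (hx : b ≤ N x s) (hy : b ≤ N y t) :
    b ≤ N (x + y) (s + t) :=
  (le_min hx hy).trans (hN.min_le_add x y s t)

end IsFuzzyNorm

namespace FuzzyTendsto

variable {V : Type*} [AddCommGroup V] [Module ℝ V] {N : V → ℝ → ℝ} {xs ys : ℕ → V} {x y : V}

lemma add (hx : FuzzyTendsto N xs x) (hN : IsFuzzyNorm N) (hy : FuzzyTendsto N ys y) :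
    FuzzyTendsto N (fun n => xs n + ys n) (x + y) := by
  intro t ht
  have hmin := (hx (t / 2) (half_pos ht)).min (hy (t / 2) (half_pos ht))
  rw [min_self] at hmin
  refine tendsto_of_tendsto_of_tendsto_of_le_of_le hmin tendsto_const_nhds (fun n => ?_)
    fun n => hN.le_one _ _
  simpa only [add_halves, add_sub_add_comm] using
    hN.min_le_add (xs n - x) (ys n - y) (t / 2) (t / 2)

lemma const_smul (hx : FuzzyTendsto N xs x) (hN : IsFuzzyNorm N) {c : ℝ} (hc : c ≠ 0) :
    FuzzyTendsto N (fun n => c • xs n) (c • x) := by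
  intro t ht
  simp_rw [← smul_sub, hN.smul_eq c _ _ hc]
  exact hx _ (div_pos ht (abs_pos.2 hc))

lemma sub (hx : FuzzyTendsto N xs x) (hN : IsFuzzyNorm N) (hy : FuzzyTendsto N ys y) :
    FuzzyTendsto N (fun n => xs n - ys n) (x - y) := by
  simpa [sub_eq_add_neg] using hx.add hN (hy.const_smul hN (c := -1) (by norm_num))

lemma unique (hx : FuzzyTendsto N xs x) (hN : IsFuzzyNorm N) (hy : FuzzyTendsto N xs y) :
    x = y := by
  rw [← sub_eq_zero, hN.eq_zero_iff]
  intro t ht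
  have hconst := hx.sub hN hy t ht
  simp only [sub_self, zero_sub, hN.map_neg] at hconst
  exact tendsto_nhds_unique tendsto_const_nhds hconst

lemma comp_succ (hx : FuzzyTendsto N xs x) : FuzzyTendsto N (fun n => xs (n + 1)) x :=
  fun t ht => (tendsto_add_atTop_iff_nat 1).2 (hx t ht)

/-- The strict inequality `s < t` makes up for the missing continuity of `N (x - y)`. -/
lemma le_of_eventually_le (hx : FuzzyTendsto N xs x) (hN : IsFuzzyNorm N) {b s t : ℝ}
    (hst : s < t) (hb : ∀ᶠ n in atTop, b ≤ N (xs n - y) s) : b ≤ N (x - y) t := by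
  obtain ⟨n, hn⟩ := hb.exists
  have hmin := (tendsto_const_nhds (x := b)).min (hx (t - s) (sub_pos.2 hst))
  rw [min_eq_left (hn.trans (hN.le_one _ _))] at hmin
  refine le_of_tendsto hmin (hb.mono fun n hn => ?_)
  have htri := hN.min_le_add (x - xs n) (xs n - y) (t - s) s
  rw [sub_add_sub_cancel, sub_add_cancel, hN.map_sub_comm x, min_comm] at htri
  exact (min_le_min_right _ hn).trans htri

end FuzzyTendsto

lemma tendsto_const_div_pow_atTop {k r : ℝ} (hk : 0 < k) (hr₀ : 0 < r) (hr₁ : r < 1) :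
    Tendsto (fun n : ℕ => k / r ^ n) atTop atTop := by
  simpa only [div_eq_mul_inv, inv_pow] using
    (tendsto_pow_atTop_atTop_of_one_lt ((one_lt_inv₀ hr₀).2 hr₁)).const_mul_atTop hk

/-- A family of error bounds `ψ x`, to be compared with `t ↦ N (f x) t` for a fuzzy norm `N`,
whose parameter grows at most by the factor `a` when `x` moves to `σ x`. It plays the role of a
control function `ε : X → ℝ` with `ε (σ x) ≤ a * ε x` in a normed space. -/
structure IsGeometricControl {X : Type*} (σ : X → X) (a : ℝ) (ψ : X → ℝ → ℝ) : Prop where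
  pos : 0 < a
  le_map : ∀ x t, ψ x t ≤ ψ (σ x) (a * t)
  tendsto_one : ∀ x, Tendsto (ψ x) atTop (nhds 1)

namespace IsGeometricControl

variable {X : Type*} {σ : X → X} {a : ℝ} {ψ : X → ℝ → ℝ}

lemma le_iterate (hψ : IsGeometricControl σ a ψ) (n : ℕ) (x : X) (t : ℝ) :
    ψ x t ≤ ψ (σ^[n] x) (a ^ n * t) := by
  induction n with
  | zero => simp
  | succ n ih =>
    rw [Function.iterate_succ_apply', pow_succ', mul_assoc]
    exact ih.trans (hψ.le_map _ _)

lemma comp_const_mul (hψ : IsGeometricControl σ a ψ) {k : ℝ} (hk : 0 < k) :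
    IsGeometricControl σ a fun x t => ψ x (k * t) where
  pos := hψ.pos
  le_map x t := by simpa only [mul_left_comm] using hψ.le_map x (k * t)
  tendsto_one x := (hψ.tendsto_one x).comp (tendsto_id.const_mul_atTop hk)

end IsGeometricControl

/-- The `n`-th Hyers iterate `c⁻ⁿ f (σⁿ x)` of the direct method for the equation
`T (σ x) = c • T x`. -/
noncomputable def hyersIterate {X Y : Type*} [AddCommGroup Y] [Module ℝ Y] (c : ℝ) (σ : X → X)
    (f : X → Y) (x : X) (n : ℕ) : Y :=
  (c ^ n)⁻¹ • f (σ^[n] x)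

section HyersIterate

variable {X Y : Type*} [AddCommGroup Y] [Module ℝ Y] {σ : X → X} {c : ℝ} {f : X → Y}

lemma hyersIterate_zero (x : X) : hyersIterate c σ f x 0 = f x := by
  simp [hyersIterate]

lemma hyersIterate_succ_sub (hc : c ≠ 0) (x : X) (n : ℕ) :
    hyersIterate c σ f x (n + 1) - hyersIterate c σ f x n =
      (c ^ (n + 1))⁻¹ • (f (σ (σ^[n] x)) - c • f (σ^[n] x)) := by
  have hpow : (c ^ (n + 1))⁻¹ * c = (c ^ n)⁻¹ := by rw [pow_succ]; field_simp
  rw [hyersIterate, hyersIterate, smul_sub, smul_smul, hpow, Function.iterate_succ_apply']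

lemma hyersIterate_map (hc : c ≠ 0) (x : X) (n : ℕ) :
    hyersIterate c σ f (σ x) n = c • hyersIterate c σ f x (n + 1) := by
  have hpow : c * (c ^ (n + 1))⁻¹ = (c ^ n)⁻¹ := by rw [pow_succ]; field_simp
  rw [hyersIterate, hyersIterate, smul_smul, hpow, Function.iterate_succ_apply]

lemma hyersIterate_eq_self (hc : c ≠ 0) (hf : ∀ x, f (σ x) = c • f x) (x : X) (n : ℕ) :
    hyersIterate c σ f x n = f x := by
  induction n with
  | zero => exact hyersIterate_zero x
  | succ n ih =>
    rw [← ih, ← sub_eq_zero, hyersIterate_succ_sub hc, hf, sub_self, smul_zero]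

end HyersIterate

section DirectMethod

variable {X Y : Type*} [AddCommGroup Y] [Module ℝ Y] {N : Y → ℝ → ℝ}
  {σ : X → X} {a c : ℝ} {ψ : X → ℝ → ℝ} {f : X → Y}

lemma fuzzyTendsto_map_of_hyersIterate (hN : IsFuzzyNorm N) (hc : c ≠ 0) {T : X → Y}
    (hT : ∀ x, FuzzyTendsto N (hyersIterate c σ f x) (T x)) (x : X) : T (σ x) = c • T x := by
  refine (hT (σ x)).unique hN ?_
  simpa only [← hyersIterate_map hc] using (hT x).comp_succ.const_smul hN hc

lemma fuzzyTendsto_hyersIterate_zero (hN : IsFuzzyNorm N) (hψ : IsGeometricControl σ a ψ)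
    (hac : a < |c|) (hf : ∀ x t, 0 < t → ψ x t ≤ N (f x) t) (x : X) :
    FuzzyTendsto N (hyersIterate c σ f x) 0 := by
  intro t ht
  have ha := hψ.pos
  have hc : 0 < |c| := ha.trans hac
  have hlim := (hψ.tendsto_one x).comp
    (tendsto_const_div_pow_atTop ht (div_pos ha hc) ((div_lt_one hc).2 hac))
  refine tendsto_of_tendsto_of_tendsto_of_le_of_le hlim tendsto_const_nhds (fun n => ?_)
    fun n => hN.le_one _ _
  have hparam : a ^ n * (t / (a / |c|) ^ n) = |c| ^ n * t := by rw [div_pow]; field_simp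
  calc ψ x (t / (a / |c|) ^ n)
      ≤ ψ (σ^[n] x) (a ^ n * (t / (a / |c|) ^ n)) := hψ.le_iterate n x _
    _ = ψ (σ^[n] x) (|c| ^ n * t) := by rw [hparam]
    _ ≤ N (f (σ^[n] x)) (|c| ^ n * t) := hf _ _ (by positivity)
    _ = N (hyersIterate c σ f x n - 0) t := by
      rw [sub_zero, hyersIterate, hN.map_inv_smul (pow_ne_zero n (abs_pos.1 hc)), abs_pow]

lemma eq_of_map_smul_of_le (hN : IsFuzzyNorm N) (hψ : IsGeometricControl σ a ψ) (hac : a < |c|)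
    {S T : X → Y} (hS : ∀ x, S (σ x) = c • S x) (hT : ∀ x, T (σ x) = c • T x)
    (hfS : ∀ x t, 0 < t → ψ x t ≤ N (f x - S x) t)
    (hfT : ∀ x t, 0 < t → ψ x t ≤ N (f x - T x) t) : S = T := by
  have hc : c ≠ 0 := abs_pos.1 (hψ.pos.trans hac)
  have hdiff : ∀ x t, 0 < t → ψ x (2⁻¹ * t) ≤ N (S x - T x) t := fun x t ht => by
    have hSf := hfS x (2⁻¹ * t) (by positivity)
    rw [hN.map_sub_comm] at hSf
    have htri := hN.le_map_add hSf (hfT x (2⁻¹ * t) (by positivity))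
    rwa [sub_add_sub_cancel, ← two_mul, mul_inv_cancel_left₀ two_ne_zero] at htri
  have hmap : ∀ x, S (σ x) - T (σ x) = c • (S x - T x) := fun x => by rw [hS, hT, smul_sub]
  funext x
  have hzero := fuzzyTendsto_hyersIterate_zero (f := fun x => S x - T x) hN
    (hψ.comp_const_mul (by norm_num)) hac hdiff x
  have hconst : FuzzyTendsto N (hyersIterate c σ (fun x => S x - T x) x) (S x - T x) :=
    fun t ht => by
      simp only [hyersIterate_eq_self (f := fun x => S x - T x) hc hmap, sub_self,
        hN.map_zero_eq_one ht, tendsto_const_nhds]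
  exact sub_eq_zero.1 (hconst.unique hN hzero)

section NearlyHomogeneous

lemma le_map_hyersIterate_succ_sub (hN : IsFuzzyNorm N) (hψ : IsGeometricControl σ a ψ)
    (hc : c ≠ 0) (hf : ∀ x t, ψ x t ≤ N (f (σ x) - c • f x) t) (x : X) (s : ℝ) (n : ℕ) :
    ψ x s ≤ N (hyersIterate c σ f x (n + 1) - hyersIterate c σ f x n)
      (s / |c| * (a / |c|) ^ n) := by
  have hparam : |c ^ (n + 1)| * (s / |c| * (a / |c|) ^ n) = a ^ n * s := by
    rw [abs_pow, pow_succ, div_pow]; field_simp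
  rw [hyersIterate_succ_sub hc, hN.map_inv_smul (pow_ne_zero _ hc), hparam]
  exact (hψ.le_iterate n x s).trans (hf _ _)

variable (hN : IsFuzzyNorm N) (hψ : IsGeometricControl σ a ψ) (hac : a < |c|)
  (hf : ∀ x t, ψ x t ≤ N (f (σ x) - c • f x) t)
include hN hψ hac hf

lemma le_map_hyersIterate_add_sub (x : X) {s : ℝ} (hs : 0 ≤ s) (n : ℕ) {p : ℕ} (hp : 0 < p) :
    ψ x s ≤ N (hyersIterate c σ f x (n + p) - hyersIterate c σ f x n)
      (s / (|c| - a) * (a / |c|) ^ n) := by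
  have hgap : 0 < |c| - a := sub_pos.2 hac
  have ha := hψ.pos
  have hc : 0 < |c| := ha.trans hac
  have hstep := le_map_hyersIterate_succ_sub hN hψ (abs_pos.1 hc) hf x s
  have hgeom : ψ x s ≤ N (hyersIterate c σ f x (n + p) - hyersIterate c σ f x n)
      (s / (|c| - a) * ((a / |c|) ^ n - (a / |c|) ^ (n + p))) := by
    induction p, hp using Nat.le_induction with
    | base =>
      convert hstep n using 2
      rw [pow_succ]; field_simp
    | succ p _ ih =>
      convert hN.le_map_add (hstep (n + p)) ih using 2
      · rw [← add_assoc, sub_add_sub_cancel]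
      · rw [← add_assoc, pow_succ]; field_simp; ring
  refine hgeom.trans (hN.mono _ ?_)
  gcongr
  exact sub_le_self _ (by positivity)

lemma fuzzyCauchy_hyersIterate (x : X) : FuzzyCauchy N (hyersIterate c σ f x) := by
  intro ε hε t ht
  have hgap : 0 < |c| - a := sub_pos.2 hac
  have ha := hψ.pos
  have hc : 0 < |c| := ha.trans hac
  have hlim := (hψ.tendsto_one x).comp (tendsto_const_div_pow_atTop (mul_pos hgap ht)
    (div_pos ha hc) ((div_lt_one hc).2 hac))
  obtain ⟨n₀, hn₀⟩ := eventually_atTop.1 (hlim.eventually_const_lt (sub_lt_self 1 hε))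
  refine ⟨n₀, fun n hn p hp => (hn₀ n hn).trans_le ?_⟩
  have hparam : (|c| - a) * t / (a / |c|) ^ n / (|c| - a) * (a / |c|) ^ n = t := by field_simp
  simpa only [hparam, Function.comp_apply] using le_map_hyersIterate_add_sub hN hψ hac hf x
    (s := (|c| - a) * t / (a / |c|) ^ n) (by positivity) n hp

lemma le_map_sub_of_fuzzyTendsto_hyersIterate {x : X} {y : Y}
    (hy : FuzzyTendsto N (hyersIterate c σ f x) y) {s t : ℝ} (hs : 0 ≤ s)
    (hst : s / (|c| - a) < t) : ψ x s ≤ N (f x - y) t := by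
  rw [hN.map_sub_comm]
  refine hy.le_of_eventually_le hN hst ((eventually_gt_atTop 0).mono fun n hn => ?_)
  simpa [hyersIterate_zero] using le_map_hyersIterate_add_sub hN hψ hac hf x hs 0 hn

end NearlyHomogeneous

end DirectMethod

/-- The defect of `f` at `p = (x, y)` in Jensen's functional equation
`f (x + y) + f (x - y) = 2 f x`. -/
def jensenDefect {X Y : Type*} [AddCommGroup X] [AddCommGroup Y] (f : X → Y) (p : X × X) : Y :=
  f (p.1 + p.2) + f (p.1 - p.2) - 2 • f p.1

lemma isAdditive_of_jensenDefect_eq_zero {X Y : Type*} [AddCommGroup X] [AddCommGroup Y]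
    [IsAddTorsionFree Y] {T : X → Y} (hT₀ : T 0 = 0) (hT : ∀ p, jensenDefect T p = 0) :
    IsAdditive T := by
  have hJ : ∀ x y, T (x + y) + T (x - y) = 2 • T x := fun x y => sub_eq_zero.1 (hT (x, y))
  have hodd : ∀ x, T (-x) = -T x := fun x => by
    simpa [hT₀, add_eq_zero_iff_neg_eq, eq_comm] using hJ 0 x
  intro x y
  have hsum : 2 • T (x + y) = 2 • (T x + T y) := by
    have hyx := hJ y x
    rw [add_comm y x, ← neg_sub x y, hodd] at hyx
    rw [smul_add, ← hJ x y, ← hyx]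
    abel
  exact nsmul_right_injective two_ne_zero hsum

lemma fuzzyTendsto_hyersIterate_jensenDefect {X Y : Type*} [AddCommGroup X] [AddCommGroup Y]
    [Module ℝ Y] {N : Y → ℝ → ℝ} (hN : IsFuzzyNorm N) {c : ℝ} {m : ℕ} {f T : X → Y}
    (hT : ∀ x, FuzzyTendsto N (hyersIterate c (m • ·) f x) (T x)) (p : X × X) :
    FuzzyTendsto N (hyersIterate c (m • ·) (jensenDefect f) p) (jensenDefect T p) := by
  convert ((hT (p.1 + p.2)).add hN (hT (p.1 - p.2))).sub hN
    ((hT p.1).const_smul hN (two_ne_zero (α := ℝ))) using 1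
  · funext n
    simp only [hyersIterate, jensenDefect, smul_iterate_apply, Prod.smul_fst, Prod.smul_snd,
      smul_add, smul_sub]
    module
  · simp only [jensenDefect, ofNat_smul_eq_nsmul]

lemma isAdditive_of_fuzzyTendsto_hyersIterate {X Y : Type*} [AddCommGroup X] [AddCommGroup Y]
    [Module ℝ Y] {N : Y → ℝ → ℝ} (hN : IsFuzzyNorm N) {a : ℝ} (ha₂ : a < 2)
    {ψ : X × X → ℝ → ℝ} (hψ : IsGeometricControl (2 • ·) a ψ) {f T : X → Y}
    (hf : ∀ p t, 0 < t → ψ p t ≤ N (jensenDefect f p) t)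
    (hT : ∀ x, FuzzyTendsto N (hyersIterate 2 (2 • ·) f x) (T x)) : IsAdditive T := by
  have : IsAddTorsionFree Y := .of_isTorsionFree ℝ Y
  have hT₀ : T 0 = 0 := by
    simpa [two_smul] using fuzzyTendsto_map_of_hyersIterate hN two_ne_zero hT 0
  exact isAdditive_of_jensenDefect_eq_zero hT₀ fun p =>
    (fuzzyTendsto_hyersIterate_jensenDefect hN hT p).unique hN
      (fuzzyTendsto_hyersIterate_zero hN hψ (by rwa [abs_two]) hf p)

/-- The two-variable version of `Ndd`: its value at `(x, y)` bounds the Jensen defect of `f`. -/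
noncomputable def pexiderControl {X Z : Type*} [Zero X] (N' : Z → ℝ → ℝ) (φ : X × X → Z)
    (p : X × X) (t : ℝ) : ℝ :=
  min (min (N' (φ p) (t / 3)) (N' (φ (p.1, 0)) (t / 3))) (N' (φ (0, p.2)) (t / 3))

section Pexider

variable {X Y Z : Type*} [AddCommGroup X] [AddCommGroup Y] [Module ℝ Y]
  {N : Y → ℝ → ℝ} {N' : Z → ℝ → ℝ} {φ : X × X → Z} {f g h : X → Y}

lemma isGeometricControl_pexiderControl [AddCommGroup Z] [Module ℝ Z] (hN' : IsFuzzyNorm N') {α : ℝ}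
    (hα : 0 < |α|) (hφ : ∀ x y, φ (2 • x, 2 • y) = α • φ (x, y)) :
    IsGeometricControl (2 • ·) |α| (pexiderControl N' φ) where
  pos := hα
  le_map := by
    rintro ⟨x, y⟩ t
    have hscale : ∀ x y, N' (φ (2 • x, 2 • y)) (|α| * t / 3) = N' (φ (x, y)) (t / 3) :=
      fun x y => by
        rw [hφ, hN'.smul_eq _ _ _ (abs_pos.1 hα), mul_div_assoc, mul_div_cancel_left₀ _ hα.ne']
    have hx := hscale x 0
    have hy := hscale 0 y
    rw [smul_zero] at hx hy
    simp only [pexiderControl, Prod.smul_mk, hscale, hx, hy, le_refl]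
  tendsto_one p := by
    have hlim := fun z => (hN'.tendsto_one z).comp
      (tendsto_id.atTop_div_const (zero_lt_three (α := ℝ)))
    simpa only [min_self] using!
      ((hlim (φ p)).min (hlim (φ (p.1, 0)))).min (hlim (φ (0, p.2)))

lemma isGeometricControl_Ndd [AddCommGroup Z] [Module ℝ Z] (hN' : IsFuzzyNorm N') {α : ℝ}
    (hα : 0 < |α|) (hφ : ∀ x y, φ (2 • x, 2 • y) = α • φ (x, y)) :
    IsGeometricControl (2 • ·) |α| (Ndd N' φ) where
  pos := hα
  le_map x := (isGeometricControl_pexiderControl hN' hα hφ).le_map (x, x)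
  tendsto_one x := (isGeometricControl_pexiderControl hN' hα hφ).tendsto_one (x, x)

variable (hN : IsFuzzyNorm N)
  (hineq : ∀ x y t, N' (φ (x, y)) t ≤ N (f (x + y) + f (x - y) - 2 • g x - 2 • h y) t)
include hN hineq

lemma pexiderControl_le_map_jensenDefect (hf : Function.Odd f) (hgh : g 0 + h 0 = 0)
    (p : X × X) (t : ℝ) : pexiderControl N' φ p t ≤ N (jensenDefect f p) t := by
  obtain ⟨x, y⟩ := p
  have hxy : pexiderControl N' φ (x, y) t ≤ _ :=
    ((min_le_left _ _).trans (min_le_left _ _)).trans (hineq x y (t / 3))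
  have hx : pexiderControl N' φ (x, y) t ≤ _ :=
    ((min_le_left _ _).trans (min_le_right _ _)).trans (hineq x 0 (t / 3))
  have hy : pexiderControl N' φ (x, y) t ≤ _ := (min_le_right _ _).trans (hineq 0 y (t / 3))
  rw [← hN.map_neg] at hx hy
  convert hN.le_map_add (hN.le_map_add hxy hx) hy using 2
  · simp only [jensenDefect, zero_add, zero_sub, add_zero, sub_zero, hf y,
      eq_neg_of_add_eq_zero_left hgh]
    module
  · ring

lemma Ndd_le_map_sub_two_smul (hf : Function.Odd f) (hgh : g 0 + h 0 = 0) (x : X) (t : ℝ) :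
    Ndd N' φ x t ≤ N (f (2 • x) - (2 : ℝ) • f x) t := by
  have : IsAddTorsionFree Y := .of_isTorsionFree ℝ Y
  have hdefect : jensenDefect f (x, x) = f (2 • x) - (2 : ℝ) • f x := by
    simp only [jensenDefect, sub_self, hf.map_zero, add_zero, two_smul]
  rw [← hdefect]
  exact pexiderControl_le_map_jensenDefect hN hineq hf hgh (x, x) t

lemma Ndd_le_map_add_sub_inv_two_smul (hf₀ : f 0 = 0) (x : X) (s : ℝ) :
    Ndd N' φ x s ≤ N (g x + h x - (2 : ℝ)⁻¹ • f (2 • x)) (s / 6) := by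
  have hvec : (2 : ℝ)⁻¹ • f (2 • x) - (g x + h x) =
      (2 : ℝ)⁻¹ • (f (x + x) + f (x - x) - 2 • g x - 2 • h x) := by
    rw [sub_self, hf₀, two_nsmul]
    module
  have hparam : |(2 : ℝ)| * (s / 6) = s / 3 := by rw [abs_two]; ring
  rw [hN.map_sub_comm, hvec, hN.map_inv_smul two_ne_zero, hparam]
  exact ((min_le_left _ _).trans (min_le_left _ _)).trans (hineq x x (s / 3))

lemma Ndd_le_map_add_sub (hf₀ : f 0 = 0) {a : ℝ} (hψ : IsGeometricControl (2 • ·) a (Ndd N' φ))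
    (ha₂ : a < 2) {T : X → Y} (hT : ∀ x, T (2 • x) = (2 : ℝ) • T x)
    (hfT : ∀ x s t, 0 ≤ s → s / (2 - a) < t → Ndd N' φ x s ≤ N (f x - T x) t)
    (x : X) {s t : ℝ} (hs : 0 ≤ s) (hst : (1 + a) / (3 * (2 - a)) * s < t) :
    Ndd N' φ x s ≤ N (g x + h x - T x) t := by
  have hgap : 0 < 2 - a := sub_pos.2 ha₂
  have hdouble : Ndd N' φ x s ≤ N ((2 : ℝ)⁻¹ • f (2 • x) - T x) (t - s / 6) := by
    have hvec : (2 : ℝ)⁻¹ • f (2 • x) - T x = (2 : ℝ)⁻¹ • (f (2 • x) - T (2 • x)) := by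
      rw [hT]
      module
    have hparam : a * s / (2 - a) < |2| * (t - s / 6) := by
      have hsplit : (1 + a) / (3 * (2 - a)) * s = s / 6 + a * s / (2 - a) / 2 := by
        field_simp; ring
      rw [abs_two]
      linarith
    rw [hvec, hN.map_inv_smul two_ne_zero]
    exact (hψ.le_map x s).trans (hfT _ _ _ (mul_nonneg hψ.pos.le hs) hparam)
  simpa only [sub_add_sub_cancel, add_sub_cancel] using
    hN.le_map_add (Ndd_le_map_add_sub_inv_two_smul hN hineq hf₀ x s) hdouble

end Pexider

theorem fuzzy_stability_pexider_odd_general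
    {X Y Z : Type*} [AddCommGroup X] [AddCommGroup Y] [Module ℝ Y] [AddCommGroup Z] [Module ℝ Z]
    (N : Y → ℝ → ℝ) (N' : Z → ℝ → ℝ)
    (hN : IsFuzzyNorm N) (hYcomplete : IsFuzzyComplete N) (hN' : IsFuzzyNorm N')
    (α : ℝ) (hα0 : 0 < |α|) (hα2 : |α| < 2)
    (φ : X × X → Z)
    (hφ : ∀ x y : X, φ (2 • x, 2 • y) = α • φ (x, y))
    (f g h : X → Y)
    (hfodd : ∀ x : X, f (-x) = -f x)
    (hgh : g 0 + h 0 = 0)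
    (hineq : ∀ x y : X, ∀ t : ℝ,
      N' (φ (x, y)) t ≤ N (f (x + y) + f (x - y) - 2 • g x - 2 • h y) t) :
    ∃! T : X → Y, IsAdditive T ∧
      (∀ x : X, ∀ t : ℝ, 0 < t →
        Ndd N' φ x ((2 - |α|) / 4 * t) ≤ N (f x - T x) t) ∧
      (∀ x : X, ∀ t : ℝ, 0 < t →
        Ndd N' φ x ((6 - 3 * |α|) / (14 - |α|) * t) ≤ N (g x + h x - T x) t) := by
  have : IsAddTorsionFree Y := .of_isTorsionFree ℝ Y
  have hf₀ : f 0 = 0 := Function.Odd.map_zero hfodd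
  have hgap : 0 < 2 - |α| := sub_pos.2 hα2
  have hα2' : |α| < |(2 : ℝ)| := by rwa [abs_two]
  have hψ := isGeometricControl_Ndd hN' hα0 hφ
  have hf := Ndd_le_map_sub_two_smul hN hineq hfodd hgh
  choose T hT using fun x => hYcomplete _ (fuzzyCauchy_hyersIterate hN hψ hα2' hf x)
  have hT₂ := fuzzyTendsto_map_of_hyersIterate hN two_ne_zero hT
  have hTadd : IsAdditive T := isAdditive_of_fuzzyTendsto_hyersIterate hN hα2
    (isGeometricControl_pexiderControl hN' hα0 hφ)
    (fun p t _ => pexiderControl_le_map_jensenDefect hN hineq hfodd hgh p t) hT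
  have hfT : ∀ x s t, 0 ≤ s → s / (2 - |α|) < t → Ndd N' φ x s ≤ N (f x - T x) t :=
    fun x s t hs hst => le_map_sub_of_fuzzyTendsto_hyersIterate hN hψ hα2' hf (hT x) hs
      (by rwa [abs_two])
  have hfT_bound : ∀ x t, 0 < t → Ndd N' φ x ((2 - |α|) / 4 * t) ≤ N (f x - T x) t :=
    fun x t ht => hfT x _ t (by positivity) (by field_simp; linarith)
  refine ⟨T, ⟨hTadd, hfT_bound, fun x t ht => ?_⟩, ?_⟩
  · have h14 : 0 < 14 - |α| := by linarith
    have h6 : 6 - 3 * |α| = 3 * (2 - |α|) := by ring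
    refine Ndd_le_map_add_sub hN hineq hf₀ hψ hα2 hT₂ hfT x (by rw [h6]; positivity) ?_
    rw [h6]
    field_simp
    linarith
  · rintro S ⟨hSadd, hfS, -⟩
    exact eq_of_map_smul_of_le hN (hψ.comp_const_mul (by positivity)) hα2'
      (fun x => by rw [two_nsmul, hSadd, two_smul]) hT₂ hfS hfT_bound

/-- Proposition 3.1: fuzzy stability of the Pexiderized quadratic equation for
odd functions; one obtains a unique additive mapping `T`. -/
theorem fuzzy_stability_pexider_odd
    {X Y Z : Type*} [AddCommGroup X] [Module ℝ X]
    [AddCommGroup Y] [Module ℝ Y] [AddCommGroup Z] [Module ℝ Z]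
    (N : Y → ℝ → ℝ) (N' : Z → ℝ → ℝ)
    (hN : IsFuzzyNorm N) (hYcomplete : IsFuzzyComplete N) (hN' : IsFuzzyNorm N')
    (α : ℝ) (hα0 : 0 < |α|) (hα2 : |α| < 2)
    (φ : X × X → Z)
    (hφ : ∀ x y : X, φ (2 • x, 2 • y) = α • φ (x, y))
    (f g h : X → Y)
    (hfodd : ∀ x : X, f (-x) = -f x)
    (hgodd : ∀ x : X, g (-x) = -g x)
    (hhodd : ∀ x : X, h (-x) = -h x)
    (hineq : ∀ x y : X, ∀ t : ℝ,
      N' (φ (x, y)) t ≤ N (f (x + y) + f (x - y) - 2 • g x - 2 • h y) t) :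
    ∃! T : X → Y, IsAdditive T ∧
      (∀ x : X, ∀ t : ℝ, 0 < t →
        Ndd N' φ x ((2 - |α|) / 4 * t) ≤ N (f x - T x) t) ∧
      (∀ x : X, ∀ t : ℝ, 0 < t →
        Ndd N' φ x ((6 - 3 * |α|) / (14 - |α|) * t) ≤ N (g x + h x - T x) t) := by
  have : IsAddTorsionFree Y := .of_isTorsionFree ℝ Y
  have hgh : g 0 + h 0 = 0 := by
    rw [Function.Odd.map_zero hgodd, Function.Odd.map_zero hhodd, add_zero]
  exact fuzzy_stability_pexider_odd_general N N' hN hYcomplete hN' α hα0 hα2 φ hφ f g h hfodd hgh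
    hineq
end

section
/- Let q > 0, p = 1/q, and let f be a function from a fuzzy normed space (X, N) to a fuzzy normed space (Y, N′) satisfying N′ (f(x+y) + f(x−y) − 2f(x) − 2f(y)) (t + s) ≥ min (N x (t^q)) (N y (s^q)) for all x, y ∈ X and s, t ∈ [0, ∞). Then for all integers n > m ≥ 0, all x ∈ X and all t > 0, N′ (f(2^n x)/4^n − f(2^m x)/4^m) (Σ_{k=m+1}^{n} t^p · 2^(k(p−2)+1)) ≥ N x t. -/
/-!
Since `f 0 = 0`, the hypothesis at `y = x` and equal levels `s` bounds `N' (f (2x) - 4 f x) (2s)`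
below by `N x (s ^ q)`. At `2 ^ k x` with `s = (2 ^ k t) ^ p` the homogeneity of `N` cancels the
factor `2 ^ k`, so every increment of `f (2 ^ k x) / 4 ^ k` has the same lower bound `N x t`, and
adding the increments with the fuzzy triangle inequality loses nothing. The resulting level is
`2 ^ p` times smaller than the required one.
-/

open Filter Finset

namespace IsFuzzyNorm

variable {X : Type*} [AddCommGroup X] [Module ℝ X] {N : X → ℝ → ℝ}

lemma apply_zero_of_pos (hN : IsFuzzyNorm N) {c : ℝ} (hc : 0 < c) : N 0 c = 1 :=
  (hN.eq_zero_iff 0).1 rfl c hc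

lemma apply_smul_mul_of_pos (hN : IsFuzzyNorm N) {c : ℝ} (hc : 0 < c) (x : X) (t : ℝ) :
    N (c • x) (c * t) = N x t := by
  rw [hN.smul_eq c x _ hc.ne', abs_of_pos hc, mul_div_cancel_left₀ t hc.ne']

lemma le_apply_sum (hN : IsFuzzyNorm N) {ι : Type*} {s : Finset ι} (hs : s.Nonempty)
    {v : ι → X} {r : ι → ℝ} {a : ℝ} (h : ∀ i ∈ s, a ≤ N (v i) (r i)) :
    a ≤ N (∑ i ∈ s, v i) (∑ i ∈ s, r i) := by
  induction hs using Finset.Nonempty.cons_induction with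
  | singleton i => simpa using h
  | cons i s hi _ ih =>
    rw [forall_mem_cons] at h
    rw [sum_cons, sum_cons]
    exact (le_min h.1 (ih h.2)).trans (hN.min_le_add _ _ _ _)

lemma le_apply_sub_of_forall_Ico (hN : IsFuzzyNorm N) {u : ℕ → X} {r : ℕ → ℝ} {a : ℝ} {m n : ℕ}
    (hmn : m < n) (h : ∀ k ∈ Ico m n, a ≤ N (u (k + 1) - u k) (r (k + 1))) :
    a ≤ N (u n - u m) (∑ k ∈ Ioc m n, r k) := by
  rw [← sum_Ico_sub u hmn.le, ← Ico_add_one_add_one_eq_Ioc, ← sum_Ico_add']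
  exact hN.le_apply_sum (nonempty_Ico.2 hmn) h

end IsFuzzyNorm

lemma four_pow_succ_mul_rpow_mul_two_rpow (k : ℕ) {t : ℝ} (ht : 0 ≤ t) (p : ℝ) :
    (4 : ℝ) ^ (k + 1) * (t ^ p * 2 ^ (((k + 1 : ℕ) : ℝ) * (p - 2) + 1 - p)) =
      2 * (2 ^ k * t) ^ p := by
  have h4 : (4 : ℝ) ^ (k + 1) = 2 ^ (2 * ((k + 1 : ℕ) : ℝ)) := by
    rw [Real.rpow_mul zero_le_two, Real.rpow_natCast]
    norm_num
  have h2 : ((2 : ℝ) ^ k) ^ p = 2 ^ (k * p) := by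
    rw [Real.rpow_mul zero_le_two, Real.rpow_natCast]
  calc (4 : ℝ) ^ (k + 1) * (t ^ p * 2 ^ (((k + 1 : ℕ) : ℝ) * (p - 2) + 1 - p))
      = t ^ p * 2 ^ (2 * ((k + 1 : ℕ) : ℝ) + (((k + 1 : ℕ) : ℝ) * (p - 2) + 1 - p)) := by
        rw [h4, Real.rpow_add two_pos]; ring
    _ = t ^ p * 2 ^ (1 + k * p) := by push_cast; ring_nf
    _ = 2 * (2 ^ k * t) ^ p := by
        rw [Real.mul_rpow (by positivity) ht, h2, Real.rpow_add two_pos, Real.rpow_one]; ring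

/-- Fuzzy `q`-almost quadratic maps: the quadratic defect of `f` at `(x, y)` is controlled by the
fuzzy norms of `x` and `y` at the `q`-th powers of the levels. -/
def IsFuzzyAlmostQuadratic {X Y : Type*} [AddCommGroup X] [AddCommGroup Y]
    (N : X → ℝ → ℝ) (N' : Y → ℝ → ℝ) (q : ℝ) (f : X → Y) : Prop :=
  ∀ x y : X, ∀ s t : ℝ, 0 ≤ s → 0 ≤ t →
    min (N x (t ^ q)) (N y (s ^ q)) ≤ N' (f (x + y) + f (x - y) - 2 • f x - 2 • f y) (t + s)

namespace IsFuzzyAlmostQuadratic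

variable {X Y : Type*} [AddCommGroup X] [Module ℝ X] [AddCommGroup Y] [Module ℝ Y]
  {N : X → ℝ → ℝ} {N' : Y → ℝ → ℝ} {q p : ℝ} {f : X → Y}

lemma map_zero (hf : IsFuzzyAlmostQuadratic N N' q f) (hN : IsFuzzyNorm N)
    (hN' : IsFuzzyNorm N') : f 0 = 0 := by
  suffices h : (-2 : ℝ) • f 0 = 0 by simpa using h
  refine (hN'.eq_zero_iff _).2 fun c hc => (hN'.le_one _ _).antisymm ?_
  have hdefect : f (0 + 0) + f (0 - 0) - 2 • f 0 - 2 • f 0 = (-2 : ℝ) • f 0 := by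
    rw [add_zero, sub_zero]; module
  have h := hf 0 0 (c / 2) (c / 2) (by positivity) (by positivity)
  rwa [hN.apply_zero_of_pos (by positivity), min_self, add_halves, hdefect] at h

lemma le_apply_map_two_smul_sub (hf : IsFuzzyAlmostQuadratic N N' q f) (hN : IsFuzzyNorm N)
    (hN' : IsFuzzyNorm N') (x : X) {s : ℝ} (hs : 0 ≤ s) :
    N x (s ^ q) ≤ N' (f ((2 : ℝ) • x) - (4 : ℝ) • f x) (2 * s) := by
  have hdefect : f (x + x) + f (x - x) - 2 • f x - 2 • f x
      = f ((2 : ℝ) • x) - (4 : ℝ) • f x := by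
    rw [sub_self, hf.map_zero hN hN', ← two_smul ℝ x]; module
  have h := hf x x s s hs hs
  rwa [min_self, hdefect, ← two_mul] at h

lemma le_apply_rescaled_succ_sub (hf : IsFuzzyAlmostQuadratic N N' q f) (hN : IsFuzzyNorm N)
    (hN' : IsFuzzyNorm N') (hq : q ≠ 0) (hp : p = 1 / q) (k : ℕ) (x : X) {t : ℝ} (ht : 0 ≤ t) :
    N x t ≤
      N' (((4 : ℝ) ^ (k + 1))⁻¹ • f ((2 : ℝ) ^ (k + 1) • x) - ((4 : ℝ) ^ k)⁻¹ • f ((2 : ℝ) ^ k • x))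
        (t ^ p * 2 ^ (((k + 1 : ℕ) : ℝ) * (p - 2) + 1 - p)) := by
  have hpow : ((2 ^ k * t) ^ p) ^ q = 2 ^ k * t := by
    rw [hp, one_div, Real.rpow_inv_rpow (by positivity) hq]
  have hvec : f ((2 : ℝ) • (2 : ℝ) ^ k • x) - (4 : ℝ) • f ((2 : ℝ) ^ k • x)
      = (4 : ℝ) ^ (k + 1) • (((4 : ℝ) ^ (k + 1))⁻¹ • f ((2 : ℝ) ^ (k + 1) • x)
          - ((4 : ℝ) ^ k)⁻¹ • f ((2 : ℝ) ^ k • x)) := by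
    rw [smul_sub, smul_inv_smul₀ (by positivity), smul_smul 2, ← pow_succ', pow_succ' 4, mul_smul,
      smul_inv_smul₀ (by positivity)]
  calc N x t = N ((2 : ℝ) ^ k • x) (((2 ^ k * t) ^ p) ^ q) := by
        rw [hpow, hN.apply_smul_mul_of_pos (by positivity)]
    _ ≤ N' (f ((2 : ℝ) • (2 : ℝ) ^ k • x) - (4 : ℝ) • f ((2 : ℝ) ^ k • x))
          (2 * (2 ^ k * t) ^ p) := hf.le_apply_map_two_smul_sub hN hN' _ (by positivity)
    _ = _ := by
        rw [hvec, ← four_pow_succ_mul_rpow_mul_two_rpow k ht,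
          hN'.apply_smul_mul_of_pos (by positivity)]

end IsFuzzyAlmostQuadratic

theorem fuzzy_quadratic_telescoping_general
    {X Y : Type*} [AddCommGroup X] [Module ℝ X] [AddCommGroup Y] [Module ℝ Y]
    {N : X → ℝ → ℝ} {N' : Y → ℝ → ℝ} (hN : IsFuzzyNorm N) (hN' : IsFuzzyNorm N')
    {q p : ℝ} (hq : q ≠ 0) (hp : p = 1 / q) {f : X → Y} (hf : IsFuzzyAlmostQuadratic N N' q f)
    {n m : ℕ} (hmn : m < n) (x : X) {t : ℝ} (ht : 0 ≤ t) :
    N x t ≤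
      N' (((4 : ℝ) ^ n)⁻¹ • f ((2 : ℝ) ^ n • x) - ((4 : ℝ) ^ m)⁻¹ • f ((2 : ℝ) ^ m • x))
        (∑ k ∈ Ioc m n, t ^ p * (2 : ℝ) ^ ((k : ℝ) * (p - 2) + 1 - p)) :=
  hN'.le_apply_sub_of_forall_Ico (u := fun k => ((4 : ℝ) ^ k)⁻¹ • f ((2 : ℝ) ^ k • x)) hmn
    fun k _ => hf.le_apply_rescaled_succ_sub hN hN' hq hp k x ht

/-- The telescoping estimate (2.6) in the proof of Theorem 2.1. -/
theorem fuzzy_quadratic_telescoping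
    {X Y : Type*} [AddCommGroup X] [Module ℝ X] [AddCommGroup Y] [Module ℝ Y]
    (N : X → ℝ → ℝ) (N' : Y → ℝ → ℝ)
    (hN : IsFuzzyNorm N) (hN' : IsFuzzyNorm N')
    (q p : ℝ) (hq : 0 < q) (hp : p = 1 / q)
    (f : X → Y)
    (hf : ∀ x y : X, ∀ s t : ℝ, 0 ≤ s → 0 ≤ t →
      min (N x (t ^ q)) (N y (s ^ q)) ≤
        N' (f (x + y) + f (x - y) - 2 • f x - 2 • f y) (t + s)) :
    ∀ n m : ℕ, m < n → ∀ x : X, ∀ t : ℝ, 0 < t →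
      N x t ≤
        N' (((4 : ℝ) ^ n)⁻¹ • f (((2 : ℝ) ^ n) • x) - ((4 : ℝ) ^ m)⁻¹ • f (((2 : ℝ) ^ m) • x))
          (∑ k ∈ Finset.Ioc m n, t ^ p * (2 : ℝ) ^ ((k : ℝ) * (p - 2) + 1)) := by
  intro n m hmn x t ht
  have hp_nonneg : 0 ≤ p := hp ▸ (one_div_pos.2 hq).le
  refine (fuzzy_quadratic_telescoping_general hN hN' hq.ne' hp hf hmn x ht.le).trans
    (hN'.mono _ (sum_le_sum fun k _ => ?_))
  gcongr
  exacts [one_le_two, sub_le_self _ hp_nonneg]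
end
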